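/- Lemma 3.2 (epi-convergence interchange of limsup and sup): let D ⊆ ℝ^m be a nonempty compact set and let f_n, f : D → ℝ be functions such that for every x ∈ D and every sequence (x_n) in D with x_n → x one has limsup_{n→∞} f_n(x_n) ≤ f(x). Then limsup_{n→∞} sup_{x∈D} f_n(x) ≤ sup_{x∈D} f(x). -/

import Mathlib

/-!
If the inequality failed, some `c` would lie strictly between the two sides. Then
`c < f n y` for infinitely many `n` and suitable points `y ∈ D` depending on `n`, and by
compactness these points converge to some `x ∈ D` along a further subsequence. Filling the
remaining indices with `x` itself gives a full sequence in `D` converging to `x`, so the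
hypothesis yields `c ≤ g x`, contradicting `sup g < c`.
-/

open Filter
open scoped Topology

/-- Lemma 3.2 (epi-convergence interchange of limsup and sup): if `D ⊆ ℝ^m` is a nonempty
compact set and `f_n, f : D → ℝ` are such that for every `x ∈ D` and every sequence
`x_n → x` in `D` one has `limsup_n f_n(x_n) ≤ f(x)`, then
`limsup_n sup_{x ∈ D} f_n(x) ≤ sup_{x ∈ D} f(x)` (suprema and limsup in the extended reals). -/
theorem limsup_sup_le_of_epi {m : ℕ} (D : Set (Fin m → ℝ))
    (hDne : D.Nonempty) (hDcpt : IsCompact D)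
    (f : ℕ → (Fin m → ℝ) → ℝ) (g : (Fin m → ℝ) → ℝ)
    (hepi : ∀ x ∈ D, ∀ xs : ℕ → (Fin m → ℝ), (∀ n, xs n ∈ D) →
      Tendsto xs atTop (𝓝 x) →
      Filter.limsup (fun n => ((f n (xs n) : ℝ) : EReal)) atTop ≤ ((g x : ℝ) : EReal)) :
    Filter.limsup (fun n => ⨆ x ∈ D, ((f n x : ℝ) : EReal)) atTop
      ≤ ⨆ x ∈ D, ((g x : ℝ) : EReal) := by
  by_contra! hlt
  obtain ⟨c, hgc, hc⟩ := exists_between hlt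
  have hfreq : ∃ᶠ n in atTop, c < ⨆ x ∈ D, ((f n x : ℝ) : EReal) :=
    frequently_lt_of_lt_limsup (by isBoundedDefault) hc
  obtain ⟨φ, hφ, hcφ⟩ := extraction_of_frequently_atTop hfreq
  have hex : ∀ k, ∃ y ∈ D, c < ((f (φ k) y : ℝ) : EReal) := fun k => by
    simpa only [lt_iSup_iff, exists_prop] using hcφ k
  choose y hyD hcy using hex
  obtain ⟨x, hxD, ψ, hψ, hlim⟩ := hDcpt.tendsto_subseq hyD
  have hθ : StrictMono (φ ∘ ψ) := hφ.comp hψ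
  -- The near-maximizers are placed at their original indices, with `x` filling the gaps.
  let xs : ℕ → (Fin m → ℝ) := Function.extend (φ ∘ ψ) (y ∘ ψ) (fun _ => x)
  have hxsθ : ∀ k, xs ((φ ∘ ψ) k) = y (ψ k) := fun k => hθ.injective.extend_apply _ _ k
  have hxs_gap : ∀ n, (¬ ∃ k, (φ ∘ ψ) k = n) → xs n = x := fun n hn =>
    Function.extend_apply' _ _ n hn
  have hxsD : ∀ n, xs n ∈ D := by
    intro n
    by_cases hn : ∃ k, (φ ∘ ψ) k = n
    · obtain ⟨k, rfl⟩ := hn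
      rw [hxsθ]
      exact hyD _
    · rw [hxs_gap n hn]
      exact hxD
  have hxs_lim : Tendsto xs atTop (𝓝 x) := by
    intro U hU
    obtain ⟨K, hK⟩ := eventually_atTop.1 (hlim.eventually_mem hU)
    refine eventually_atTop.2 ⟨(φ ∘ ψ) K, fun n hKn => ?_⟩
    change xs n ∈ U
    by_cases hn : ∃ k, (φ ∘ ψ) k = n
    · obtain ⟨k, rfl⟩ := hn
      rw [hxsθ]
      exact hK k (hθ.le_iff_le.1 hKn)
    · rw [hxs_gap n hn]
      exact mem_of_mem_nhds hU
  have hfreq_xs : ∃ᶠ n in atTop, c ≤ ((f n (xs n) : ℝ) : EReal) := by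
    refine hθ.tendsto_atTop.frequently (Frequently.of_forall fun k => ?_)
    rw [hxsθ]
    exact (hcy (ψ k)).le
  have hcg : c ≤ ((g x : ℝ) : EReal) :=
    (le_limsup_of_frequently_le hfreq_xs (by isBoundedDefault)).trans
      (hepi x hxD xs hxsD hxs_lim)
  exact absurd (hcg.trans (le_iSup₂_of_le x hxD le_rfl)) hgc.not_ge
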